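/- Let p, p' ∈ ℤ² with p.y < 0, p'.y < 0 and p.x < p'.x, and let ≺_p, ≺_{p'} be the waterline orders assigned to p and p'. Then no two integers form a bad pair for (≺_p, p) and (≺_{p'}, p'). -/

import Mathlib

open scoped Classical

/-- Points of the digital plane. -/
abbrev Pt : Type := ℤ × ℤ

/-- `q` lies in the closed first quadrant of `p`. -/
def Quad1 (p q : Pt) : Prop := p.1 ≤ q.1 ∧ p.2 ≤ q.2

/-- The number of elements `y` of the finite set `J` with `y ≺ x` or `y = x`. -/
noncomputable def rankLE (lt : ℤ → ℤ → Prop) (J : Finset ℤ) (x : ℤ) : ℤ :=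
  ((J.filter fun y => lt y x ∨ y = x).card : ℤ)

/-- `x` is among the `k` smallest elements of `J` with respect to the linear order `lt`. -/
def AmongSmallest (lt : ℤ → ℤ → Prop) (J : Finset ℤ) (k x : ℤ) : Prop :=
  x ∈ J ∧ rankLE lt J x ≤ k

/-- The interval `I(p,q) = [p.x+p.y, q.x+q.y-1]`. -/
noncomputable def Ival (p q : Pt) : Finset ℤ := Finset.Icc (p.1 + p.2) (q.1 + q.2 - 1)

/-- Membership in `H(lt,p,q)`: the `q.x - p.x` smallest elements of `I(p,q)` w.r.t. `lt`. -/
def Hmem (lt : ℤ → ℤ → Prop) (p q : Pt) (a : ℤ) : Prop :=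
  AmongSmallest lt (Ival p q) (q.1 - p.1) a

/-- The digital segment `R(lt,p,q)` for `q ∈ Q¹_p`, generated by the linear order `lt`. -/
noncomputable def seg (lt : ℤ → ℤ → Prop) (p q : Pt) : Set Pt :=
  {r : Pt | p.1 ≤ r.1 ∧ r.1 ≤ q.1 ∧ p.2 ≤ r.2 ∧ r.2 ≤ q.2 ∧
    p.1 + p.2 ≤ r.1 + r.2 ∧ r.1 + r.2 ≤ q.1 + q.2 ∧
    r.1 - p.1 =
      (((Finset.Icc (p.1 + p.2) (r.1 + r.2 - 1)).filter fun a => Hmem lt p q a).card : ℤ)}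

/-- `(t₁,t₂)` is a witness to the violation of (S3) for the pair of sets `(S,S')`. -/
def Witness (S S' : Set Pt) (t₁ t₂ : Pt) : Prop :=
  t₁ ∈ S ∧ t₁ ∈ S' ∧ t₂ ∈ S ∧ t₂ ∈ S' ∧
  t₁.1 + t₁.2 < t₂.1 + t₂.2 ∧
  ((t₁.1 + 1, t₁.2) : Pt) ∈ S ∧ ((t₁.1, t₁.2 + 1) : Pt) ∈ S' ∧
  ((t₂.1, t₂.2 - 1) : Pt) ∈ S ∧ ((t₂.1 - 1, t₂.2) : Pt) ∈ S'

/-- `a ≠ b` form a bad pair for `(lt,p)` and `(lt',p')`, where `p.x ≤ p'.x`. -/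
def BadPair (lt lt' : ℤ → ℤ → Prop) (p p' : Pt) (a b : ℤ) : Prop :=
  a ≠ b ∧ ∃ C ℓ : ℤ, p.1 + p.2 ≤ C ∧ p'.1 + p'.2 ≤ C ∧
    a ∈ Finset.Icc (p.1 + p.2) (C - 1) ∧ b ∈ Finset.Icc (p.1 + p.2) (C - 1) ∧
    a ∈ Finset.Icc (p'.1 + p'.2) (C - 1) ∧ b ∈ Finset.Icc (p'.1 + p'.2) (C - 1) ∧
    AmongSmallest lt (Finset.Icc (p.1 + p.2) (C - 1)) ℓ a ∧
    ¬ AmongSmallest lt (Finset.Icc (p.1 + p.2) (C - 1)) ℓ b ∧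
    AmongSmallest lt' (Finset.Icc (p'.1 + p'.2) (C - 1)) (ℓ - (p'.1 - p.1)) b ∧
    ¬ AmongSmallest lt' (Finset.Icc (p'.1 + p'.2) (C - 1)) (ℓ - (p'.1 - p.1)) a

/-- Bad pair for arbitrary `p, p'`: for `p.x > p'.x` the roles of `p` and `p'` are exchanged. -/
def BadPairSym (lt lt' : ℤ → ℤ → Prop) (p p' : Pt) (a b : ℤ) : Prop :=
  (p.1 ≤ p'.1 ∧ BadPair lt lt' p p' a b) ∨ (p'.1 ≤ p.1 ∧ BadPair lt' lt p' p a b)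

/-- Adjacency in the unit grid graph on `ℤ²`. -/
def GridAdj (u v : Pt) : Prop := |u.1 - v.1| + |u.2 - v.2| = 1

/-- `S` is the vertex set of a path from `p` to `q` in the unit grid graph. -/
def IsGridPath (S : Set Pt) (p q : Pt) : Prop :=
  ∃ (n : ℕ) (f : ℕ → Pt), f 0 = p ∧ f n = q ∧
    (∀ i, i < n → GridAdj (f i) (f (i + 1))) ∧
    (∀ i j, i ≤ n → j ≤ n → f i = f j → i = j) ∧
    S = {r : Pt | ∃ i, i ≤ n ∧ f i = r}

/-- The pair `p, q` has nonnegative slope. -/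
def NonnegPair (p q : Pt) : Prop := (p.1 ≤ q.1 ∧ p.2 ≤ q.2) ∨ (q.1 ≤ p.1 ∧ q.2 ≤ p.2)

/-- A nonnegative-slope digital segment system `R` is a CDS: properties (S1)-(S5). -/
def IsCDS (R : Pt → Pt → Set Pt) : Prop :=
  ∀ p q : Pt, NonnegPair p q →
    IsGridPath (R p q) p q ∧
    R p q = R q p ∧
    (∀ r s : Pt, r ∈ R p q → s ∈ R p q → NonnegPair r s → R r s ⊆ R p q) ∧
    (∃ r : Pt, r ∉ R p q ∧ NonnegPair p r ∧ R p q ⊆ R p r) ∧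
    (p.1 = q.1 → ∀ r ∈ R p q, r.1 = p.1) ∧
    (p.2 = q.2 → ∀ r ∈ R p q, r.2 = p.2)

/-- The nonnegative-slope digital segment system generated by an assignment of
linear orders to the points of `ℤ²`. -/
noncomputable def genR (ord : Pt → ℤ → ℤ → Prop) (p q : Pt) : Set Pt :=
  if p.1 ≤ q.1 ∧ p.2 ≤ q.2 then seg (ord p) p q else seg (ord q) q p

/-- The orders `lt` at `p` and `lt'` at `p'` are in agreement. -/
def Agree (p p' : Pt) (lt lt' : ℤ → ℤ → Prop) : Prop :=
  ∀ a b : ℤ, max p.1 p'.1 + max p.2 p'.2 ≤ a → max p.1 p'.1 + max p.2 p'.2 ≤ b →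
    (lt a b ↔ lt' a b)

/-- Two digital segments are smooth: the antidiagonal distance function is
monotonically nondecreasing or nonincreasing on its domain. -/
def SmoothPair (S S' : Set Pt) : Prop :=
  (∀ r₁ s₁ r₂ s₂ : Pt, r₁ ∈ S → s₁ ∈ S' → r₂ ∈ S → s₂ ∈ S' →
      r₁.1 + r₁.2 = s₁.1 + s₁.2 → r₂.1 + r₂.2 = s₂.1 + s₂.2 →
      r₁.1 + r₁.2 ≤ r₂.1 + r₂.2 → r₁.1 - s₁.1 ≤ r₂.1 - s₂.1) ∨
  (∀ r₁ s₁ r₂ s₂ : Pt, r₁ ∈ S → s₁ ∈ S' → r₂ ∈ S → s₂ ∈ S' →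
      r₁.1 + r₁.2 = s₁.1 + s₁.2 → r₂.1 + r₂.2 = s₂.1 + s₂.2 →
      r₁.1 + r₁.2 ≤ r₂.1 + r₂.2 → r₂.1 - s₂.1 ≤ r₁.1 - s₁.1)

/-- The waterline assignment of linear orders. -/
def waterOrd (p : Pt) : ℤ → ℤ → Prop := fun a b =>
  if 0 ≤ p.2 then a < b
  else (p.1 ≤ a ∧ p.1 ≤ b ∧ a < b) ∨ (p.1 ≤ a ∧ b < p.1) ∨ (a < p.1 ∧ b < p.1 ∧ b < a)

/-- `p₃` has a conflicting priority with respect to `(lt,p)` and `(lt',p')`. -/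
def ConflictPriority (lt lt' : ℤ → ℤ → Prop) (p p' p₃ : Pt) : Prop :=
  ∃ a b : ℤ, a ∈ Ival p p₃ ∧ a ∈ Ival p' p₃ ∧ b ∈ Ival p p₃ ∧ b ∈ Ival p' p₃ ∧
    Hmem lt p p₃ b ∧ ¬ Hmem lt p p₃ a ∧ Hmem lt' p' p₃ a ∧ ¬ Hmem lt' p' p₃ b

/-- Rank of an element at or above `p.x`. -/
theorem rank_ge (p : Pt) (h : p.2 < 0) (C x : ℤ) (hC : x ≤ C - 1) (hx : p.1 ≤ x) :
    rankLE (waterOrd p) (Finset.Icc (p.1 + p.2) (C - 1)) x = x - p.1 + 1 := by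
  unfold rankLE
  have e : ((Finset.Icc (p.1 + p.2) (C - 1)).filter fun y => waterOrd p y x ∨ y = x)
      = Finset.Icc p.1 x := by
    ext y
    simp only [Finset.mem_filter, Finset.mem_Icc, waterOrd, if_neg (not_le.mpr h)]
    omega
  rw [e, Int.card_Icc]
  omega

/-- Rank of an element below `p.x`. -/
theorem rank_lt (p : Pt) (h : p.2 < 0) (C x : ℤ) (hm : p.1 + p.2 ≤ x) (hC : x ≤ C - 1)
    (hx : x < p.1) :
    rankLE (waterOrd p) (Finset.Icc (p.1 + p.2) (C - 1)) x = C - x := by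
  unfold rankLE
  have e : ((Finset.Icc (p.1 + p.2) (C - 1)).filter fun y => waterOrd p y x ∨ y = x)
      = Finset.Icc x (C - 1) := by
    ext y
    simp only [Finset.mem_filter, Finset.mem_Icc, waterOrd, if_neg (not_le.mpr h)]
    omega
  rw [e, Int.card_Icc]
  omega

/-- two waterline orders at points below the waterline have no bad pair. -/
theorem statement11 (p p' : Pt) (h : p.2 < 0) (h' : p'.2 < 0) (hx : p.1 < p'.1) :
    ∀ a b : ℤ, ¬ BadPair (waterOrd p) (waterOrd p') p p' a b := by
  rintro a b ⟨hab, C, l, -, -, ha, hb, ha', hb', ⟨-, h1⟩, h2, ⟨-, h3⟩, h4⟩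
  have h2 := fun hr => h2 ⟨hb, hr⟩
  have h4 := fun hr => h4 ⟨ha', hr⟩
  rw [Finset.mem_Icc] at ha hb ha' hb'
  have A1 := rank_ge p h C a ha.2
  have A2 := rank_lt p h C a ha.1 ha.2
  have B1 := rank_ge p h C b hb.2
  have B2 := rank_lt p h C b hb.1 hb.2
  have A3 := rank_ge p' h' C a ha'.2
  have A4 := rank_lt p' h' C a ha'.1 ha'.2
  have B3 := rank_ge p' h' C b hb'.2
  have B4 := rank_lt p' h' C b hb'.1 hb'.2
  generalize rankLE _ _ _ = r1 at *
  generalize rankLE _ _ _ = r2 at *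
  generalize rankLE _ _ _ = r3 at *
  generalize rankLE _ _ _ = r4 at *
  rw [imp_false] at h2 h4
  omega
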